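/- Let f_n^{(i)} (i = 1,…,N, n ∈ ℤ) be smooth real-valued functions of (x,t,y,z) satisfying ∂_x f_n^{(i)} = f_{n+1}^{(i)}, ∂_z f_n^{(i)} = f_{n+2}^{(i)}, ∂_t f_n^{(i)} = −4 f_{n+3}^{(i)}, and ∂_y f_n^{(i)} = f_{n−1}^{(i)} for all i and n. For an integer k, set σ(k) = e^{−xy} ρ_N(k). Then D_x D_y σ(k)·σ(k) = −2 σ(k+1) σ(k−1). -/

import Mathlib

/-!
Write `|n₁, …, n_N|` for the determinant whose columns are `(f_{n_j}^{(i)})_i`. Differentiating it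
in `x` (in `y`) raises (lowers) each index in turn, and terms with a repeated index vanish, so with
`ρ = |k, …, k+m|`
* `ρ_x = |k, …, k+m-1, k+m+1|`,
* `ρ_y = |k-1, k+1, …, k+m|`,
* `ρ_xy = |k-1, k+1, …, k+m-1, k+m+1| + ρ`.

The three-term Plücker relation evaluates `ρ ρ_xy - ρ_x ρ_y` as `ρ² - ρ(k+1) ρ(k-1)`, the signs of
the two cyclic rotations of columns cancelling. Since `D_x D_y (a b)·(a b)` splits as
`a² D_x D_y b·b + b² D_x D_y a·a`, the factor `a = e^{-xy}` removes exactly the `ρ²` term.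
-/

open Function Matrix

section PluckerCoord

lemma submatrix_update {l n α R : Type*} [DecidableEq n] (A : Matrix l α R) (g : n → α) (j : n)
    (a : α) : A.submatrix id (update g j a) = (A.submatrix id g).updateCol j (A.col a) := by
  ext i j'
  rcases eq_or_ne j' j with rfl | hj <;> simp [*]

variable {n α R : Type*} [Fintype n] [DecidableEq n] [CommRing R]

/-- The Plücker coordinate of `A` at `g`: the determinant formed by the columns `g j` of `A`.
The columns are given by a function rather than a subset, so coordinates are alternating in `g`. -/
def pluckerCoord (A : Matrix n α R) (g : n → α) : R :=
  (A.submatrix id g).det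

lemma cramer_submatrix_col (A : Matrix n α R) (g : n → α) (a : α) (j : n) :
    cramer (A.submatrix id g) (A.col a) j = pluckerCoord A (update g j a) := by
  rw [cramer_apply, pluckerCoord, submatrix_update]

lemma pluckerCoord_eq_zero (A : Matrix n α R) {g : n → α} {p q : n} (hpq : p ≠ q)
    (hg : g p = g q) : pluckerCoord A g = 0 :=
  det_zero_of_column_eq hpq fun i => by simp [hg]

lemma pluckerCoord_comp_perm (A : Matrix n α R) (g : n → α) (π : Equiv.Perm n) :
    pluckerCoord A (g ∘ π) = Equiv.Perm.sign π * pluckerCoord A g :=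
  det_permute' π (A.submatrix id g)

/-- Cramer's rule expands column `b` of `A` in the columns `g j`; the relation is the image of this
expansion under the linear form `v ↦ cramer (A.submatrix id h) v q`. -/
lemma pluckerCoord_mul_pluckerCoord_update (A : Matrix n α R) (g h : n → α) (q : n) (b : α) :
    pluckerCoord A g * pluckerCoord A (update h q b) =
      ∑ j, pluckerCoord A (update g j b) * pluckerCoord A (update h q (g j)) := by
  have expansion : pluckerCoord A g • A.col b =
      ∑ j, pluckerCoord A (update g j b) • A.col (g j) := by
    rw [pluckerCoord, ← mulVec_cramer, mulVec_eq_sum]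
    simp only [cramer_submatrix_col, op_smul_eq_smul]
    rfl
  simpa only [map_smul, map_sum, Finset.sum_apply, Pi.smul_apply, smul_eq_mul,
    cramer_submatrix_col] using congrArg (cramer (A.submatrix id h) · q) expansion

lemma pluckerCoord_update_update_swap (A : Matrix n α R) (g : n → α) {p q : n} (hpq : p ≠ q)
    (a : α) :
    pluckerCoord A (update (update g p a) q (g p)) = -pluckerCoord A (update g q a) := by
  have swapped : update (update g p a) q (g p) = update g q a ∘ Equiv.swap p q := by
    ext j
    rcases eq_or_ne j q with rfl | hq
    · simp [hpq]
    rcases eq_or_ne j p with rfl | hp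
    · simp [hpq]
    simp [hp, hq, Equiv.swap_apply_of_ne_of_ne]
  rw [swapped, pluckerCoord_comp_perm, Equiv.Perm.sign_swap hpq]
  simp

lemma pluckerCoord_three_term (A : Matrix n α R) (g : n → α) {p q : n} (hpq : p ≠ q) (a b : α) :
    pluckerCoord A g * pluckerCoord A (update (update g p a) q b) =
      pluckerCoord A (update g p a) * pluckerCoord A (update g q b) -
        pluckerCoord A (update g q a) * pluckerCoord A (update g p b) := by
  have repeated : ∀ j, j ≠ p ∧ j ≠ q →
      pluckerCoord A (update g j b) * pluckerCoord A (update (update g p a) q (g j)) = 0 :=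
    fun j ⟨hp, hq⟩ => mul_eq_zero_of_right _ (pluckerCoord_eq_zero A hq (by simp [hp, hq]))
  have unchanged : update (update g p a) q (g q) = update g p a := by
    simp [hpq.symm]
  rw [pluckerCoord_mul_pluckerCoord_update, Fintype.sum_eq_add p q hpq repeated,
    pluckerCoord_update_update_swap A g hpq, unchanged]
  ring

lemma sum_pluckerCoord_update_eq_sum_subset (A : Matrix n α R) (g : n → α) (e : α → α)
    (S : Finset n) (hS : ∀ j ∉ S, ∃ i ≠ j, g i = e (g j)) :
    ∑ j, pluckerCoord A (update g j (e (g j))) =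
      ∑ j ∈ S, pluckerCoord A (update g j (e (g j))) := by
  refine (Finset.sum_subset S.subset_univ fun j _ hj => ?_).symm
  obtain ⟨i, hij, hi⟩ := hS j hj
  exact pluckerCoord_eq_zero A hij (by simp [hij, hi])

end PluckerCoord

section Window

variable {m : ℕ} {R : Type*} [CommRing R]

/-- The `N` consecutive indices `k, k + 1, …, k + N - 1`, so that `pluckerCoord A (window N k)` is
the determinant `ρ_N(k)`. -/
def window (N : ℕ) (k : ℤ) : Fin N → ℤ := fun j => k + j

lemma window_comp_finRotate (k : ℤ) :
    window (m + 1) (k - 1) ∘ finRotate (m + 1) =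
      update (window (m + 1) k) (Fin.last m) (k - 1) := by
  ext j
  induction j using Fin.lastCases <;> simp [window, Fin.ne_of_lt]

lemma update_window_comp_finRotate (k : ℤ) :
    update (window (m + 1) k) 0 (k + m + 1) ∘ finRotate (m + 1) = window (m + 1) (k + 1) := by
  ext j
  induction j using Fin.lastCases <;> simp [window, add_assoc, add_comm, add_left_comm]

lemma pluckerCoord_window_add_one_mul_sub_one (A : Matrix (Fin (m + 1)) ℤ R) (k : ℤ) :
    pluckerCoord A (window (m + 1) (k + 1)) * pluckerCoord A (window (m + 1) (k - 1)) =
      pluckerCoord A (update (window (m + 1) k) 0 (k + m + 1)) *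
        pluckerCoord A (update (window (m + 1) k) (Fin.last m) (k - 1)) := by
  rw [← update_window_comp_finRotate, ← window_comp_finRotate, pluckerCoord_comp_perm,
    pluckerCoord_comp_perm]
  ring

lemma sum_pluckerCoord_window_raise (A : Matrix (Fin (m + 1)) ℤ R) (k : ℤ) :
    ∑ j, pluckerCoord A (update (window (m + 1) k) j (window (m + 1) k j + 1)) =
      pluckerCoord A (update (window (m + 1) k) (Fin.last m) (k + m + 1)) := by
  rw [sum_pluckerCoord_update_eq_sum_subset A _ (· + 1) {Fin.last m}, Finset.sum_singleton]
  · simp [window]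
  · intro j hj
    induction j using Fin.lastCases with
    | last => simp at hj
    | cast j => exact ⟨j.succ, j.castSucc_lt_succ.ne', by simp [window, add_assoc]⟩

lemma sum_pluckerCoord_window_lower (A : Matrix (Fin (m + 1)) ℤ R) (k : ℤ) :
    ∑ j, pluckerCoord A (update (window (m + 1) k) j (window (m + 1) k j - 1)) =
      pluckerCoord A (update (window (m + 1) k) 0 (k - 1)) := by
  rw [sum_pluckerCoord_update_eq_sum_subset A _ (· - 1) {0}, Finset.sum_singleton]
  · simp [window]
  · intro j hj
    induction j using Fin.cases with
    | zero => simp at hj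
    | succ j => exact ⟨j.castSucc, j.castSucc_lt_succ.ne, by simp [window, ← add_assoc]⟩

lemma sum_pluckerCoord_update_window_lower (A : Matrix (Fin (m + 2)) ℤ R) (k : ℤ)
    {g : Fin (m + 2) → ℤ}
    (hg : g = update (window (m + 2) k) (Fin.last (m + 1)) (k + (m + 1 : ℕ) + 1)) :
    ∑ j, pluckerCoord A (update g j (g j - 1)) =
      pluckerCoord A (update g 0 (k - 1)) + pluckerCoord A (window (m + 2) k) := by
  have first : g 0 - 1 = k - 1 := by simp [hg, window, Fin.ext_iff]
  have last : update g (Fin.last (m + 1)) (g (Fin.last (m + 1)) - 1) = window (m + 2) k := by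
    simp [hg, window]
  rw [sum_pluckerCoord_update_eq_sum_subset A _ (· - 1) {0, Fin.last (m + 1)},
    Finset.sum_pair (by simp [Fin.ext_iff]), first, last]
  intro j hj
  induction j using Fin.cases with
  | zero => simp at hj
  | succ j =>
    refine ⟨j.castSucc, j.castSucc_lt_succ.ne, ?_⟩
    rw [hg, update_of_ne j.castSucc_lt_last.ne, update_of_ne (by simp_all)]
    simp [window, ← add_assoc]

/-- The identity `ρ ρ_xy = ρ_x ρ_y + ρ² - ρ(k+1) ρ(k-1)` freed of derivatives, with `g` the column
indices of `ρ_x`. -/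
lemma pluckerCoord_window_mul_sum_lower (A : Matrix (Fin (m + 1)) ℤ R) (k : ℤ)
    {g : Fin (m + 1) → ℤ} (hg : g = update (window (m + 1) k) (Fin.last m) (k + m + 1)) :
    pluckerCoord A (window (m + 1) k) * ∑ j, pluckerCoord A (update g j (g j - 1)) =
      pluckerCoord A g * pluckerCoord A (update (window (m + 1) k) 0 (k - 1)) +
        pluckerCoord A (window (m + 1) k) ^ 2 -
        pluckerCoord A (window (m + 1) (k + 1)) * pluckerCoord A (window (m + 1) (k - 1)) := by
  cases m with
  | zero => simp [hg, pluckerCoord, window, sq]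
  | succ m =>
    have hne : (0 : Fin (m + 2)) ≠ Fin.last (m + 1) := by simp [Fin.ext_iff]
    have plucker := pluckerCoord_three_term A (window (m + 2) k) hne (k - 1)
      (k + (m + 1 : ℕ) + 1)
    rw [update_comm hne, ← hg] at plucker
    rw [sum_pluckerCoord_update_window_lower A k hg, pluckerCoord_window_add_one_mul_sub_one]
    linear_combination plucker

end Window

section Calculus

variable {𝕜 R : Type*} [NontriviallyNormedField 𝕜] [NormedCommRing R] [NormedAlgebra 𝕜 R]

lemma hasDerivAt_det {n : Type*} [Fintype n] [DecidableEq n] {M : 𝕜 → Matrix n n R}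
    {M' : Matrix n n R} {x : 𝕜} (hM : ∀ i j, HasDerivAt (fun s => M s i j) (M' i j) x) :
    HasDerivAt (fun s => (M s).det) (∑ j, ((M x).updateCol j (M'.col j)).det) x := by
  have leibniz (π : Equiv.Perm n) :
      HasDerivAt (fun s => ∏ i, M s (π i) i)
        (∑ j, ∏ i, (M x).updateCol j (M'.col j) (π i) i) x := by
    convert HasDerivAt.fun_finsetProd (u := Finset.univ) fun i _ => hM (π i) i using 2 with j
    rw [← Finset.prod_erase_mul _ _ (Finset.mem_univ j), smul_eq_mul]
    congr 1
    · exact Finset.prod_congr rfl fun i hi => updateCol_ne (Finset.ne_of_mem_erase hi)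
    · simp
  simp only [det_apply']
  rw [Finset.sum_comm]
  simp only [← Finset.mul_sum]
  exact HasDerivAt.fun_sum fun π _ => (leibniz π).const_mul _

lemma hasDerivAt_pluckerCoord {n α : Type*} [Fintype n] [DecidableEq n] {A : 𝕜 → Matrix n α R}
    {e : α → α} {x : 𝕜} (hA : ∀ i a, HasDerivAt (fun s => A s i a) (A x i (e a)) x)
    (g : n → α) :
    HasDerivAt (fun s => pluckerCoord (A s) g)
      (∑ j, pluckerCoord (A x) (update g j (e (g j)))) x := by
  simp only [pluckerCoord, submatrix_update]
  exact hasDerivAt_det (M' := (A x).submatrix id (e ∘ g)) fun i j => hA i (g j)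

/-- Hirota's bilinear derivative `D_x D_y f·g`. Being built from `deriv`, it is meaningful only
where the mixed derivatives exist, see `HasMixedDerivAt`. -/
noncomputable def hirotaDxDy (f g : 𝕜 → 𝕜 → R) (x y : 𝕜) : R :=
  deriv (fun y' => deriv (fun x' => f x' y') x) y * g x y
    - deriv (fun x' => f x' y) x * deriv (fun y' => g x y') y
    - deriv (fun y' => f x y') y * deriv (fun x' => g x' y) x
    + f x y * deriv (fun y' => deriv (fun x' => g x' y') x) y

/-- `f` has partial derivatives `fx y` and `fy` and mixed derivative `fxy` at `(x, y)`. Here `fx` is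
the `x`-derivative along the whole line through `x`, since it is differentiated again in `y`. -/
structure HasMixedDerivAt (f : 𝕜 → 𝕜 → R) (fx : 𝕜 → R) (fy fxy : R) (x y : 𝕜) : Prop where
  fst : ∀ y', HasDerivAt (fun x' => f x' y') (fx y') x
  snd : HasDerivAt (fun y' => f x y') fy y
  mixed : HasDerivAt fx fxy y

namespace HasMixedDerivAt

variable {f g : 𝕜 → 𝕜 → R} {fx gx : 𝕜 → R} {fy fxy gy gxy : R} {x y : 𝕜}

lemma mul (hf : HasMixedDerivAt f fx fy fxy x y) (hg : HasMixedDerivAt g gx gy gxy x y) :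
    HasMixedDerivAt (fun x' y' => f x' y' * g x' y') (fun y' => fx y' * g x y' + f x y' * gx y')
      (fy * g x y + f x y * gy) (fxy * g x y + fx y * gy + (fy * gx y + f x y * gxy)) x y where
  fst y' := (hf.fst y').fun_mul (hg.fst y')
  snd := hf.snd.fun_mul hg.snd
  mixed := (hf.mixed.fun_mul hg.snd).fun_add (hf.snd.fun_mul hg.mixed)

lemma hirotaDxDy_self (hf : HasMixedDerivAt f fx fy fxy x y) :
    hirotaDxDy f f x y = 2 * (f x y * fxy - fx y * fy) := by
  simp only [hirotaDxDy, (hf.fst _).deriv, hf.snd.deriv, hf.mixed.deriv]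
  ring

lemma hirotaDxDy_mul_self (hf : HasMixedDerivAt f fx fy fxy x y)
    (hg : HasMixedDerivAt g gx gy gxy x y) :
    hirotaDxDy (fun x' y' => f x' y' * g x' y') (fun x' y' => f x' y' * g x' y') x y =
      f x y ^ 2 * hirotaDxDy g g x y + g x y ^ 2 * hirotaDxDy f f x y := by
  rw [(hf.mul hg).hirotaDxDy_self, hf.hirotaDxDy_self, hg.hirotaDxDy_self]
  ring

end HasMixedDerivAt

end Calculus

section Toda

variable {𝕜 R : Type*} [NontriviallyNormedField 𝕜] [NormedCommRing R] [NormedAlgebra 𝕜 R]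

lemma hasMixedDerivAt_pluckerCoord_window {m : ℕ} {A : 𝕜 → 𝕜 → Matrix (Fin (m + 1)) ℤ R}
    (hx : ∀ i n x y, HasDerivAt (fun x' => A x' y i n) (A x y i (n + 1)) x)
    (hy : ∀ i n x y, HasDerivAt (fun y' => A x y' i n) (A x y i (n - 1)) y)
    (k : ℤ) {g : Fin (m + 1) → ℤ}
    (hg : g = update (window (m + 1) k) (Fin.last m) (k + m + 1)) (x y : 𝕜) :
    HasMixedDerivAt (fun x' y' => pluckerCoord (A x' y') (window (m + 1) k))
      (fun y' => pluckerCoord (A x y') g)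
      (pluckerCoord (A x y) (update (window (m + 1) k) 0 (k - 1)))
      (∑ j, pluckerCoord (A x y) (update g j (g j - 1))) x y where
  fst y' := by
    rw [hg, ← sum_pluckerCoord_window_raise]
    exact hasDerivAt_pluckerCoord (fun i n => hx i n x y') _
  snd := by
    rw [← sum_pluckerCoord_window_lower]
    exact hasDerivAt_pluckerCoord (fun i n => hy i n x y) _
  mixed := hasDerivAt_pluckerCoord (fun i n => hy i n x y) g

lemma pluckerCoord_window_toda {N : ℕ} {A : 𝕜 → 𝕜 → Matrix (Fin N) ℤ R}
    (hx : ∀ i n x y, HasDerivAt (fun x' => A x' y i n) (A x y i (n + 1)) x)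
    (hy : ∀ i n x y, HasDerivAt (fun y' => A x y' i n) (A x y i (n - 1)) y)
    (k : ℤ) (x y : 𝕜) :
    ∃ ρx ρy ρxy, HasMixedDerivAt (fun x' y' => pluckerCoord (A x' y') (window N k)) ρx ρy ρxy x y ∧
      pluckerCoord (A x y) (window N k) * ρxy - ρx y * ρy =
        pluckerCoord (A x y) (window N k) ^ 2 -
          pluckerCoord (A x y) (window N (k + 1)) * pluckerCoord (A x y) (window N (k - 1)) := by
  cases N with
  | zero =>
    refine ⟨fun _ => 0, 0, 0, ?_, by simp [pluckerCoord]⟩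
    constructor <;> simp [pluckerCoord, hasDerivAt_const]
  | succ m =>
    refine ⟨_, _, _, hasMixedDerivAt_pluckerCoord_window hx hy k rfl x y, ?_⟩
    rw [pluckerCoord_window_mul_sum_lower (A x y) k rfl]
    ring

end Toda

section Gauge

variable {𝕜 : Type*} [RCLike 𝕜]

lemma hasMixedDerivAt_exp_neg_mul (x y : 𝕜) :
    HasMixedDerivAt (fun x' y' : 𝕜 => NormedSpace.exp (-(x' * y')))
      (fun y' => NormedSpace.exp (-(x * y')) * -y') (NormedSpace.exp (-(x * y)) * -x)
      (NormedSpace.exp (-(x * y)) * -x * -y + NormedSpace.exp (-(x * y)) * -1) x y := by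
  have hy : HasDerivAt (fun y' => NormedSpace.exp (-(x * y')))
      (NormedSpace.exp (-(x * y)) * -x) y :=
    hasDerivAt_exp.comp y (hasDerivAt_const_mul x).fun_neg
  exact ⟨fun y' => hasDerivAt_exp.comp x (hasDerivAt_mul_const y').fun_neg, hy,
    hy.fun_mul (hasDerivAt_id' y).fun_neg⟩

lemma hirotaDxDy_exp_neg_mul (x y : 𝕜) :
    hirotaDxDy (fun x' y' : 𝕜 => NormedSpace.exp (-(x' * y')))
        (fun x' y' => NormedSpace.exp (-(x' * y'))) x y =
      -2 * NormedSpace.exp (-(x * y)) ^ 2 := by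
  rw [(hasMixedDerivAt_exp_neg_mul x y).hirotaDxDy_self]
  ring

theorem stmt_9_general {N : ℕ} {f : Fin N → ℤ → 𝕜 → 𝕜 → 𝕜}
    (hfx : ∀ i n x y, HasDerivAt (fun x' => f i n x' y) (f i (n + 1) x y) x)
    (hfy : ∀ i n x y, HasDerivAt (fun y' => f i n x y') (f i (n - 1) x y) y)
    {σ : ℤ → 𝕜 → 𝕜 → 𝕜}
    (hσ : ∀ k x y, σ k x y =
      NormedSpace.exp (-(x * y)) * det (of fun i j : Fin N => f i (k + (j.val : ℤ)) x y))
    (k : ℤ) (x y : 𝕜) :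
    hirotaDxDy (σ k) (σ k) x y = -2 * (σ (k + 1) x y * σ (k - 1) x y) := by
  let A (x y : 𝕜) : Matrix (Fin N) ℤ 𝕜 := of fun i n => f i n x y
  have hσA (k : ℤ) : σ k = fun x y =>
      NormedSpace.exp (-(x * y)) * pluckerCoord (A x y) (window N k) := by
    ext x y
    exact hσ k x y
  obtain ⟨ρx, ρy, ρxy, hρ, toda⟩ :=
    pluckerCoord_window_toda (A := A) hfx hfy k x y
  simp only [hσA]
  rw [(hasMixedDerivAt_exp_neg_mul x y).hirotaDxDy_mul_self hρ, hirotaDxDy_exp_neg_mul,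
    hρ.hirotaDxDy_self, toda]
  ring

end Gauge

/-- For smooth functions `f_n^{(i)}(x,t,y,z)` with
`∂_x f_n = f_{n+1}`, `∂_z f_n = f_{n+2}`, `∂_t f_n = -4 f_{n+3}`, `∂_y f_n = f_{n-1}`,
and `σ(k) = e^{-xy} ρ_N(k)` where `ρ_N(k) = det[f^{(i)}_{k+j-1}]`, the bilinear equation
`D_x D_y σ(k)·σ(k) = -2 σ(k+1) σ(k-1)` holds. -/
theorem stmt_9 (N : ℕ) (hN : 0 < N) (f : Fin N → ℤ → ℝ → ℝ → ℝ → ℝ → ℝ)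
    (hsm : ∀ i n, ContDiff ℝ (⊤ : ℕ∞)
      (fun p : ℝ × ℝ × ℝ × ℝ => f i n p.1 p.2.1 p.2.2.1 p.2.2.2))
    (hfx : ∀ i n x t y z, deriv (fun x' => f i n x' t y z) x = f i (n + 1) x t y z)
    (hfz : ∀ i n x t y z, deriv (fun z' => f i n x t y z') z = f i (n + 2) x t y z)
    (hft : ∀ i n x t y z, deriv (fun t' => f i n x t' y z) t = -4 * f i (n + 3) x t y z)
    (hfy : ∀ i n x t y z, deriv (fun y' => f i n x t y' z) y = f i (n - 1) x t y z)
    (σ : ℤ → ℝ → ℝ → ℝ → ℝ → ℝ)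
    (hσ : ∀ k x t y z, σ k x t y z =
      Real.exp (-(x * y)) *
        Matrix.det (Matrix.of fun i j : Fin N => f i (k + (j.val : ℤ)) x t y z)) :
    ∀ (k : ℤ) (x t y z : ℝ),
      (deriv (fun y' => deriv (fun x' => σ k x' t y' z) x) y) * σ k x t y z
        - (deriv (fun x' => σ k x' t y z) x) * (deriv (fun y' => σ k x t y' z) y)
        - (deriv (fun y' => σ k x t y' z) y) * (deriv (fun x' => σ k x' t y z) x)
        + σ k x t y z * (deriv (fun y' => deriv (fun x' => σ k x' t y' z) x) y)
      = -2 * (σ (k + 1) x t y z * σ (k - 1) x t y z) := by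
  intro k x t y z
  have hf (i n) : Differentiable ℝ fun p : ℝ × ℝ × ℝ × ℝ => f i n p.1 p.2.1 p.2.2.1 p.2.2.2 :=
    (hsm i n).differentiable (by simp)
  have hx (i n x y) : HasDerivAt (fun x' => f i n x' t y z) (f i (n + 1) x t y z) x := by
    rw [← hfx]
    exact ((hf i n).comp (f := fun x' => (x', t, y, z)) (by fun_prop) x).hasDerivAt
  have hy (i n x y) : HasDerivAt (fun y' => f i n x t y' z) (f i (n - 1) x t y z) y := by
    rw [← hfy]
    exact ((hf i n).comp (f := fun y' => (x, t, y', z)) (by fun_prop) y).hasDerivAt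
  exact stmt_9_general (f := fun i n x y => f i n x t y z) hx hy
    (σ := fun k x y => σ k x t y z)
    (fun k x y => by rw [hσ, Real.exp_eq_exp_ℝ]) k x y
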